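/- Let σ > 0, let A ∈ ℝ^{m×n} be a matrix, and let v ∈ ℝ^m be a vector lying in the range of A, i.e., there exists w₀ ∈ ℝ^n with A·w₀ = v. Let γ^σ be the isotropic Gaussian measure on ℝ^n, let P be its pushforward under the map z ↦ v + A·z, and let Q be its pushforward under z ↦ A·z. Set Δ := inf{‖w‖₂ : w ∈ ℝ^n, A·w = v} (which equals ‖A⁺v‖₂ for the Moore–Penrose pseudoinverse A⁺ of A). Then for every α ≥ 0 and every δ ≥ 0, (P, Q) is (α, δ)-close if and only if (gaussianReal Δ σ², gaussianReal 0 σ²) is (α, δ)-close; in other words, the hockey-stick divergence of order α between P and Q equals that between the one-dimensional Gaussians N(Δ, σ²) and N(0, σ²). -/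

import Mathlib

open MeasureTheory ProbabilityTheory Matrix

/-- `(P, Q)` is `(α, δ)`-close: `P(O) ≤ α·Q(O) + δ` for every measurable set `O`. -/
def Close {X : Type*} [MeasurableSpace X] (α δ : ℝ) (P Q : Measure X) : Prop :=
  ∀ O : Set X, MeasurableSet O → P O ≤ ENNReal.ofReal α * Q O + ENNReal.ofReal δ

open scoped NNReal ENNReal

lemma Close.map_of {X Y : Type*} [MeasurableSpace X] [MeasurableSpace Y] {α δ : ℝ}
    {P Q : Measure X} (h : Close α δ P Q) {f : X → Y} (hf : Measurable f) :
    Close α δ (P.map f) (Q.map f) := by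
  intro O hO
  rw [Measure.map_apply hf hO, Measure.map_apply hf hO]
  exact h _ (hf hO)

lemma Close.prod_of {X Y : Type*} [MeasurableSpace X] [MeasurableSpace Y] {α δ : ℝ}
    {P Q : Measure X} [SFinite P] [SFinite Q] (h : Close α δ P Q)
    (ν : Measure Y) [IsProbabilityMeasure ν] :
    Close α δ (P.prod ν) (Q.prod ν) := by
  intro O hO
  rw [Measure.prod_apply_symm hO, Measure.prod_apply_symm hO]
  calc ∫⁻ y, P ((fun x => (x, y)) ⁻¹' O) ∂ν
      ≤ ∫⁻ y, (ENNReal.ofReal α * Q ((fun x => (x, y)) ⁻¹' O) + ENNReal.ofReal δ) ∂ν :=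
        lintegral_mono fun y => h _ (measurable_prodMk_right hO)
    _ = _ := by
        rw [lintegral_add_right _ measurable_const,
          lintegral_const_mul _ (measurable_measure_prodMk_right hO)]
        simp

lemma close_self_iff {X : Type*} [MeasurableSpace X] {α δ : ℝ}
    (P : Measure X) [IsProbabilityMeasure P] :
    Close α δ P P ↔ 1 ≤ ENNReal.ofReal α + ENNReal.ofReal δ := by
  constructor
  · intro h
    simpa using h Set.univ MeasurableSet.univ
  · intro h O _
    calc P O = 1 * P O := (one_mul _).symm
      _ ≤ (ENNReal.ofReal α + ENNReal.ofReal δ) * P O := by gcongr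
      _ = ENNReal.ofReal α * P O + ENNReal.ofReal δ * P O := add_mul _ _ _
      _ ≤ ENNReal.ofReal α * P O + ENNReal.ofReal δ * 1 := by gcongr; exact prob_le_one
      _ = _ := by rw [mul_one]

lemma charFunDual_gauss (s : ℝ≥0) (L : StrongDual ℝ ℝ) :
    charFunDual (gaussianReal 0 s) L = Complex.exp (-(s * (L 1 : ℂ) ^ 2 / 2)) := by
  rw [charFunDual_eq_charFun_map_one, gaussianReal_map_continuousLinearMap,
    charFun_gaussianReal]
  congr 1
  simp [max_eq_left (sq_nonneg (L 1))]
  ring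

lemma charFunDual_gauss_pi {n : ℕ} (s : ℝ≥0) (L : StrongDual ℝ (Fin n → ℝ)) :
    charFunDual (Measure.pi fun _ : Fin n => gaussianReal 0 s) L
      = Complex.exp (-(s * ((∑ i, L (Pi.single i 1) ^ 2 : ℝ) : ℂ) / 2)) := by
  rw [charFunDual_pi]
  simp_rw [charFunDual_gauss]
  rw [← Complex.exp_sum]
  congr 1
  simp [Finset.mul_sum, Finset.sum_div]

lemma gauss_pi_map_dot {n : ℕ} (s : ℝ≥0) (e : Fin n → ℝ) (he : ∑ i, e i ^ 2 = 1) :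
    (Measure.pi fun _ : Fin n => gaussianReal 0 s).map (fun z => e ⬝ᵥ z) = gaussianReal 0 s := by
  let g : StrongDual ℝ (Fin n → ℝ) := ∑ i, e i • ContinuousLinearMap.proj i
  have hg : ∀ z, g z = e ⬝ᵥ z := by intro z; simp [g, dotProduct]
  have hg' : (fun z => e ⬝ᵥ z) = g := by ext z; simp [hg]
  rw [hg']
  apply Measure.ext_of_charFunDual
  ext L
  rw [charFunDual_map, charFunDual_gauss_pi, charFunDual_gauss]
  congr 4
  have : ∀ i, (L ∘L g) (Pi.single i 1) = e i * L 1 := by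
    intro i
    have := L.map_smul (e i) 1
    simpa [hg] using this
  simp_rw [this, mul_pow, ← Finset.sum_mul, he]
  simp

lemma gauss_recombine {n : ℕ} (s : ℝ≥0) (e : Fin n → ℝ) (he : ∑ i, e i ^ 2 = 1) :
    ((gaussianReal 0 s).prod (Measure.pi fun _ : Fin n => gaussianReal 0 s)).map
      (fun p : ℝ × (Fin n → ℝ) => p.1 • e + (p.2 - (e ⬝ᵥ p.2) • e))
      = Measure.pi fun _ : Fin n => gaussianReal 0 s := by
  let g : StrongDual ℝ (Fin n → ℝ) := ∑ i, e i • ContinuousLinearMap.proj i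
  have hg : ∀ z, g z = e ⬝ᵥ z := by intro z; simp [g, dotProduct]
  let T : ℝ × (Fin n → ℝ) →L[ℝ] (Fin n → ℝ) :=
    (ContinuousLinearMap.fst ℝ ℝ (Fin n → ℝ)).smulRight e
      + (ContinuousLinearMap.snd ℝ ℝ (Fin n → ℝ)
        - (g ∘L ContinuousLinearMap.snd ℝ ℝ (Fin n → ℝ)).smulRight e)
  have hT : (fun p : ℝ × (Fin n → ℝ) => p.1 • e + (p.2 - (e ⬝ᵥ p.2) • e)) = T := by
    ext p; simp [T, hg]
  rw [hT]
  apply Measure.ext_of_charFunDual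
  ext L
  rw [charFunDual_map, charFunDual_prod, charFunDual_gauss_pi, charFunDual_gauss,
    charFunDual_gauss_pi, ← Complex.exp_add]
  congr 1
  have h1 : ((L ∘L T) ∘L ContinuousLinearMap.inl ℝ ℝ (Fin n → ℝ)) 1 = L e := by
    simp [T]
  have h2 : ∀ i, ((L ∘L T) ∘L ContinuousLinearMap.inr ℝ ℝ (Fin n → ℝ)) (Pi.single i 1)
      = L (Pi.single i 1) - e i * L e := by
    intro i; simp [T, hg]
  have h3 : L e = ∑ i, e i * L (Pi.single i 1) := by
    conv_lhs => rw [pi_eq_sum_univ' e]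
    simp
  have h4 : ∑ i, (L (Pi.single i 1) - e i * L e) ^ 2
      = ∑ i, L (Pi.single i 1) ^ 2 - (L e) ^ 2 := by
    have : ∀ i, (L (Pi.single i 1) - e i * L e) ^ 2 = L (Pi.single i 1) ^ 2
      - 2 * L e * (e i * L (Pi.single i 1)) + (L e) ^ 2 * e i ^ 2 := fun i => by ring
    simp_rw [this]
    rw [Finset.sum_add_distrib, Finset.sum_sub_distrib, ← Finset.mul_sum, ← Finset.mul_sum,
      ← h3, he]
    ring
  simp_rw [h1, h2, h4]
  push_cast
  ring

lemma exists_transpose_sol {m n : ℕ} (A : Matrix (Fin m) (Fin n) ℝ) (w₀ : Fin n → ℝ) :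
    ∃ u : Fin m → ℝ, A *ᵥ (Aᵀ *ᵥ u) = A *ᵥ w₀ := by
  have hle : LinearMap.range (A * Aᵀ).mulVecLin ≤ LinearMap.range A.mulVecLin := by
    rintro _ ⟨u, rfl⟩
    exact ⟨Aᵀ *ᵥ u, by rw [mulVecLin_apply, mulVecLin_apply, mulVec_mulVec]⟩
  have heq := Submodule.eq_of_le_of_finrank_eq hle (rank_self_mul_transpose A)
  have : A *ᵥ w₀ ∈ LinearMap.range (A * Aᵀ).mulVecLin := by
    rw [heq]; exact ⟨w₀, rfl⟩
  obtain ⟨u, hu⟩ := this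
  exact ⟨u, by rw [mulVec_mulVec]; exact hu⟩

lemma sInf_sol {m n : ℕ} (A : Matrix (Fin m) (Fin n) ℝ) (v u : Fin m → ℝ)
    (hu : A *ᵥ (Aᵀ *ᵥ u) = v) :
    sInf {c : ℝ | ∃ w : Fin n → ℝ, A.mulVec w = v ∧ c = Real.sqrt (∑ i, w i ^ 2)}
      = Real.sqrt (∑ i, (Aᵀ *ᵥ u) i ^ 2) := by
  apply IsLeast.csInf_eq
  refine ⟨⟨_, hu, rfl⟩, ?_⟩
  rintro c ⟨w, hw, rfl⟩
  apply Real.sqrt_le_sqrt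
  set x := Aᵀ *ᵥ u with hx
  have h0 : ∀ y, x ⬝ᵥ y = u ⬝ᵥ (A *ᵥ y) := by
    intro y
    rw [hx, mulVec_transpose, dotProduct_mulVec]
  have h1 : x ⬝ᵥ w = x ⬝ᵥ x := by rw [h0, h0, hw, hu]
  have h2 : ∑ i, (w i - x i) ^ 2 = ∑ i, w i ^ 2 - 2 * (x ⬝ᵥ w) + x ⬝ᵥ x := by
    simp only [dotProduct, Finset.mul_sum]
    rw [← Finset.sum_sub_distrib, ← Finset.sum_add_distrib]
    exact Finset.sum_congr rfl fun i _ => by ring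
  have h3 : 0 ≤ ∑ i, (w i - x i) ^ 2 := Finset.sum_nonneg fun i _ => sq_nonneg _
  have h4 : ∑ i, x i ^ 2 = x ⬝ᵥ x := Finset.sum_congr rfl fun i _ => by ring
  linarith

lemma projected_aux {m n : ℕ} (s : ℝ≥0) (A : Matrix (Fin m) (Fin n) ℝ) (v u : Fin m → ℝ)
    (hu : A *ᵥ (Aᵀ *ᵥ u) = v) (α δ : ℝ) :
    Close α δ
        (Measure.map (fun z => v + A.mulVec z) (Measure.pi fun _ : Fin n => gaussianReal 0 s))
        (Measure.map A.mulVec (Measure.pi fun _ : Fin n => gaussianReal 0 s))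
      ↔ Close α δ (gaussianReal (Real.sqrt (∑ i, (Aᵀ *ᵥ u) i ^ 2)) s) (gaussianReal 0 s) := by
  set x := Aᵀ *ᵥ u with hx
  set D := Real.sqrt (∑ i, x i ^ 2) with hD
  have hA : Measurable A.mulVec :=
    (Continuous.matrix_mulVec continuous_const continuous_id).measurable
  have hA' : Measurable (fun z => v + A.mulVec z) := measurable_const.add hA
  have hD2 : D ^ 2 = ∑ i, x i ^ 2 := Real.sq_sqrt (Finset.sum_nonneg fun i _ => sq_nonneg _)
  by_cases h0 : D = 0
  · have hx0 : x = 0 := by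
      rw [h0] at hD2
      have := (Finset.sum_eq_zero_iff_of_nonneg (fun i _ => sq_nonneg (x i))).1 (by rw [← hD2]; simp)
      ext i
      simpa using this i (Finset.mem_univ i)
    have hv0 : v = 0 := by rw [← hu, hx0]; simp
    have : (fun z => v + A.mulVec z) = A.mulVec := by ext z; simp [hv0]
    rw [this, h0]
    have := Measure.isProbabilityMeasure_map
      (μ := Measure.pi fun _ : Fin n => gaussianReal 0 s) hA.aemeasurable
    rw [close_self_iff, close_self_iff]
  let e : Fin n → ℝ := D⁻¹ • x
  have hxe : x = D • e := by simp [e, smul_smul, h0]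
  have he : ∑ i, e i ^ 2 = 1 := by
    simp only [e, Pi.smul_apply, smul_eq_mul, mul_pow]
    rw [← Finset.mul_sum, ← hD2]
    field_simp
  have hxx : x ⬝ᵥ x = D ^ 2 := by
    rw [hD2]; exact Finset.sum_congr rfl fun i _ => by ring
  have hadj : ∀ y, u ⬝ᵥ (A *ᵥ y) = x ⬝ᵥ y := by
    intro y
    rw [hx, mulVec_transpose, dotProduct_mulVec]
  have hND : gaussianReal D s = (gaussianReal 0 s).map (· + D) := by
    rw [gaussianReal_map_add_const, zero_add]
  constructor
  · intro h
    have hf : Measurable (fun y : Fin m → ℝ => D⁻¹ * (u ⬝ᵥ y)) :=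
      (continuous_const.mul (Continuous.dotProduct continuous_const continuous_id)).measurable
    have h' := h.map_of hf
    have hdot : Measurable (fun z : Fin n → ℝ => e ⬝ᵥ z) :=
      (Continuous.dotProduct continuous_const continuous_id).measurable
    rw [Measure.map_map hf hA', Measure.map_map hf hA] at h'
    have e1 : (fun y : Fin m → ℝ => D⁻¹ * (u ⬝ᵥ y)) ∘ A.mulVec = fun z => e ⬝ᵥ z := by
      ext z
      simp [hadj, e]
    have e2 : (fun y : Fin m → ℝ => D⁻¹ * (u ⬝ᵥ y)) ∘ (fun z => v + A.mulVec z)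
        = (· + D) ∘ (fun z => e ⬝ᵥ z) := by
      ext z
      have : D⁻¹ * D ^ 2 = D := by field_simp
      simp [hadj, e, dotProduct_add, ← hu, hxx, mul_add, this, add_comm]
    rw [e1, e2, ← Measure.map_map (measurable_add_const D) hdot, gauss_pi_map_dot s e he,
      ← hND] at h'
    exact h'
  · intro h
    let g : ℝ × (Fin n → ℝ) → (Fin n → ℝ) := fun p => p.1 • e + (p.2 - (e ⬝ᵥ p.2) • e)
    have hg : Measurable g := by
      have : Continuous g := by
        have : Continuous (fun p : ℝ × (Fin n → ℝ) => e ⬝ᵥ p.2) :=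
          Continuous.dotProduct continuous_const continuous_snd
        fun_prop
      exact this.measurable
    have h' := (h.prod_of (Measure.pi fun _ : Fin n => gaussianReal 0 s)).map_of (hA.comp hg)
    have e0 := gauss_recombine s e he
    change Measure.map g _ = _ at e0
    have e1 : (gaussianReal D s).prod (Measure.pi fun _ : Fin n => gaussianReal 0 s)
        = ((gaussianReal 0 s).prod (Measure.pi fun _ : Fin n => gaussianReal 0 s)).map
          (Prod.map (· + D) id) := by
      rw [← Measure.map_prod_map _ _ (measurable_add_const D) measurable_id, Measure.map_id, hND]
    have e2 : (A.mulVec ∘ g) ∘ (Prod.map (· + D) id) = (fun z => v + A.mulVec z) ∘ g := by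
      ext1 p
      simp only [Function.comp, g, Prod.map, id]
      rw [← hu, ← mulVec_add]
      congr 1
      rw [hxe, add_smul]
      abel
    rw [e1, Measure.map_map (hA.comp hg) ((measurable_add_const D).prodMap measurable_id), e2,
      ← Measure.map_map hA' hg, ← Measure.map_map hA hg, e0] at h'
    exact h'


/-- DP analysis of the projected Gaussian mechanism: if `v ∈ Range(A)`, then with
`P = (z ↦ v + A z)_* N(0, σ² I_n)`, `Q = (z ↦ A z)_* N(0, σ² I_n)` and
`Δ = inf{‖w‖₂ : A w = v} (= ‖A⁺ v‖₂)`, the pair `(P, Q)` is `(α, δ)`-close if and only if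
`(N(Δ, σ²), N(0, σ²))` is `(α, δ)`-close. -/
theorem projected_gaussian_close_iff (m n : ℕ) (σ : ℝ) (hσ : 0 < σ)
    (A : Matrix (Fin m) (Fin n) ℝ) (v : Fin m → ℝ)
    (hv : ∃ w₀ : Fin n → ℝ, A.mulVec w₀ = v)
    (α δ : ℝ) (hα : 0 ≤ α) (hδ : 0 ≤ δ) :
    Close α δ
        (Measure.map (fun z => v + A.mulVec z)
          (Measure.pi fun _ : Fin n => gaussianReal 0 ⟨σ ^ 2, sq_nonneg σ⟩))
        (Measure.map A.mulVec
          (Measure.pi fun _ : Fin n => gaussianReal 0 ⟨σ ^ 2, sq_nonneg σ⟩))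
      ↔ Close α δ
          (gaussianReal
            (sInf {c : ℝ | ∃ w : Fin n → ℝ, A.mulVec w = v ∧ c = Real.sqrt (∑ i, w i ^ 2)})
            ⟨σ ^ 2, sq_nonneg σ⟩)
          (gaussianReal 0 ⟨σ ^ 2, sq_nonneg σ⟩) := by
  obtain ⟨w₀, hw₀⟩ := hv
  obtain ⟨u, hu⟩ := exists_transpose_sol A w₀
  rw [hw₀] at hu
  rw [sInf_sol A v u hu]
  exact projected_aux _ A v u hu α δ
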